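/- For every 0 < ε < Λ, the function u ↦ ∫_ε^Λ (φh_t)′(u) dt is differentiable at every u ∈ ℝ, with derivative (d/du) ∫_ε^Λ (φh_t)′(u) dt = φ(u)·(h_Λ(u) − h_ε(u)) + ∫_ε^Λ [φ″(u)·h_t(u) + 2·φ′(u)·h_t′(u)] dt. (Here one uses the heat equation ∂_t h_t = ∂_u² h_t to evaluate ∫_ε^Λ φ(u)·∂_u² h_t(u) dt = φ(u)·(h_Λ(u) − h_ε(u)).) -/

import Mathlib

open MeasureTheory Topology Filter

/-- The one-dimensional heat kernel `h_t(u) = (4πt)^(−1/2) · exp(−u²/(4t))`. -/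
noncomputable def heat (t u : ℝ) : ℝ :=
  (Real.sqrt (4 * Real.pi * t))⁻¹ * Real.exp (-(u ^ 2) / (4 * t))

/-- The `u`-derivative of the heat kernel, `h_t′(u) = −(u/(2t)) · h_t(u)`. -/
noncomputable def heat' (t u : ℝ) : ℝ := -(u / (2 * t)) * heat t u

/-- `(φh_t)′(u) = φ′(u)·h_t(u) + φ(u)·h_t′(u)`. -/
noncomputable def phiHeat' (φ : ℝ → ℝ) (t u : ℝ) : ℝ :=
  deriv φ u * heat t u + φ u * heat' t u

/-!
As `φ` does not depend on `t`, the integral of `(φh_t)′` over `t` is `φ′H + φH₁`, where `H` and `H₁`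
are the integrals over `t` of `h_t` and `h_t′`. Differentiating under the integral sign gives
`H′ = H₁`, and `H₁′` is the integral of `∂_u² h_t = ∂_t h_t`, that is `h_Λ - h_ε`. The claim is then
the product rule for `φ′H + φH₁`.
-/

open Set Function
open scoped Interval

section ParametricIntegral

variable {E : Type*} [NormedAddCommGroup E] {μ : Measure ℝ} [IsLocallyFiniteMeasure μ] {a b : ℝ}

theorem intervalIntegrable_of_continuousOn_uncurry {X : Type*} [TopologicalSpace X]
    {f : ℝ → X → E} {s : Set ℝ} [s.OrdConnected] {u : Set X}
    (hf : ContinuousOn (uncurry f) (s ×ˢ u)) (ha : a ∈ s) (hb : b ∈ s) {x : X} (hx : x ∈ u) :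
    IntervalIntegrable (fun t => f t x) μ a b :=
  have hab : [[a, b]] ⊆ s := OrdConnected.uIcc_subset ‹s.OrdConnected› ha hb
  ((hf.uncurry_right x hx).mono hab).intervalIntegrable

theorem hasDerivAt_intervalIntegral_of_continuousOn {𝕜 : Type*} [RCLike 𝕜] [NormedSpace ℝ E]
    [NormedSpace 𝕜 E] {F F' : ℝ → 𝕜 → E} {x₀ : 𝕜} {s : Set 𝕜} (hs : s ∈ 𝓝 x₀)
    (hF : ∀ x ∈ s, IntervalIntegrable (fun t => F t x) μ a b)
    (hF' : ContinuousOn (uncurry F') ([[a, b]] ×ˢ s))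
    (hderiv : ∀ t ∈ Ι a b, ∀ x ∈ s, HasDerivAt (F t) (F' t x) x) :
    HasDerivAt (fun x => ∫ t in a..b, F t x ∂μ) (∫ t in a..b, F' t x₀ ∂μ) x₀ := by
  have hx₀ : x₀ ∈ s := mem_of_mem_nhds hs
  obtain ⟨K, hK, hKs, hKcompact⟩ := local_compact_nhds hs
  obtain ⟨C, hC⟩ := (isCompact_uIcc.prod hKcompact).exists_bound_of_continuousOn
    (hF'.mono (prod_mono_right hKs))
  have hF'_int : IntervalIntegrable (fun t => F' t x₀) μ a b :=
    intervalIntegrable_of_continuousOn_uncurry hF' left_mem_uIcc right_mem_uIcc hx₀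
  refine (intervalIntegral.hasDerivAt_integral_of_dominated_loc_of_deriv_le
    (F := fun x t => F t x) (F' := fun x t => F' t x) (bound := fun _ => C) hK
    ?_ (hF x₀ hx₀) hF'_int.def'.aestronglyMeasurable ?_ intervalIntegrable_const ?_).2
  · filter_upwards [hs] with x hx using (hF x hx).def'.aestronglyMeasurable
  · exact .of_forall fun t ht x hx => hC (t, x) ⟨uIoc_subset_uIcc ht, hx⟩
  · exact .of_forall fun t ht x hx => hderiv t ht x (hKs hx)

end ParametricIntegral

section HeatKernel

/-- The second `u`-derivative of the heat kernel, which by the heat equation is also its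
`t`-derivative. -/
noncomputable def heat'' (t u : ℝ) : ℝ := (u ^ 2 / (4 * t ^ 2) - 1 / (2 * t)) * heat t u

theorem continuousOn_uncurry_heat : ContinuousOn (uncurry heat) (Ioi 0 ×ˢ univ) := by
  rintro ⟨t, u⟩ ⟨ht : 0 < t, -⟩
  have hsqrt : √(4 * Real.pi * t) ≠ 0 := by positivity
  have h4t : 4 * t ≠ 0 := by positivity
  unfold uncurry heat
  exact ContinuousAt.continuousWithinAt (by fun_prop (disch := assumption))

theorem continuousOn_uncurry_heat' : ContinuousOn (uncurry heat') (Ioi 0 ×ˢ univ) := by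
  refine ContinuousOn.mul ?_ continuousOn_uncurry_heat
  rintro ⟨t, u⟩ ⟨ht : 0 < t, -⟩
  have h2t : 2 * t ≠ 0 := by positivity
  exact ContinuousAt.continuousWithinAt (by fun_prop (disch := assumption))

theorem continuousOn_uncurry_heat'' : ContinuousOn (uncurry heat'') (Ioi 0 ×ˢ univ) := by
  refine ContinuousOn.mul ?_ continuousOn_uncurry_heat
  rintro ⟨t, u⟩ ⟨ht : 0 < t, -⟩
  have h2t : 2 * t ≠ 0 := by positivity
  have h4t : 4 * t ^ 2 ≠ 0 := by positivity
  exact ContinuousAt.continuousWithinAt (by fun_prop (disch := assumption))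

variable {t : ℝ}

theorem hasDerivAt_heat (ht : t ≠ 0) (u : ℝ) : HasDerivAt (heat t) (heat' t u) u := by
  have hexponent : HasDerivAt (fun v : ℝ => -(v ^ 2) / (4 * t)) (-(2 * u) / (4 * t)) u := by
    simpa using ((hasDerivAt_pow 2 u).neg).div_const (4 * t)
  refine (hexponent.exp.const_mul (√(4 * Real.pi * t))⁻¹).congr_deriv ?_
  unfold heat' heat
  field_simp
  ring

theorem hasDerivAt_heat' (ht : t ≠ 0) (u : ℝ) : HasDerivAt (heat' t) (heat'' t u) u := by
  have hfactor : HasDerivAt (fun v : ℝ => -(v / (2 * t))) (-(1 / (2 * t))) u :=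
    ((hasDerivAt_id u).div_const (2 * t)).neg
  refine (hfactor.mul (hasDerivAt_heat ht u)).congr_deriv ?_
  unfold heat'' heat'
  field_simp
  ring

theorem hasDerivAt_heat_time (ht : 0 < t) (u : ℝ) :
    HasDerivAt (fun s => heat s u) (heat'' t u) t := by
  have hpos : 0 < 4 * Real.pi * t := by positivity
  have hsqrt : √(4 * Real.pi * t) ≠ 0 := by positivity
  have hsq : √(4 * Real.pi * t) ^ 2 = 4 * Real.pi * t := Real.sq_sqrt hpos.le
  have hprefactor : HasDerivAt (fun s => (√(4 * Real.pi * s))⁻¹)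
      (-1 / (2 * t) * (√(4 * Real.pi * t))⁻¹) t := by
    refine (((hasDerivAt_const_mul (4 * Real.pi)).sqrt hpos.ne').fun_inv hsqrt).congr_deriv ?_
    rw [hsq]
    field_simp
  have hexponent : HasDerivAt (fun s => -(u ^ 2) / (4 * s)) (u ^ 2 / (4 * t ^ 2)) t := by
    refine ((hasDerivAt_const t (-(u ^ 2))).fun_div (hasDerivAt_const_mul 4)
      (by positivity)).congr_deriv ?_
    field_simp
    ring
  refine (hprefactor.mul hexponent.exp).congr_deriv ?_
  unfold heat'' heat
  ring

end HeatKernel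

section HeatIntegral

variable {ε Λ : ℝ}

theorem intervalIntegrable_heat (hε : 0 < ε) (hΛ : 0 < Λ) (u : ℝ) :
    IntervalIntegrable (fun t => heat t u) volume ε Λ :=
  intervalIntegrable_of_continuousOn_uncurry continuousOn_uncurry_heat hε hΛ (mem_univ u)

theorem intervalIntegrable_heat' (hε : 0 < ε) (hΛ : 0 < Λ) (u : ℝ) :
    IntervalIntegrable (fun t => heat' t u) volume ε Λ :=
  intervalIntegrable_of_continuousOn_uncurry continuousOn_uncurry_heat' hε hΛ (mem_univ u)

theorem integral_heat'' (hε : 0 < ε) (hΛ : 0 < Λ) (u : ℝ) :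
    ∫ t in ε..Λ, heat'' t u = heat Λ u - heat ε u :=
  intervalIntegral.integral_eq_sub_of_hasDerivAt
    (fun _ ht => hasDerivAt_heat_time (ordConnected_Ioi.uIcc_subset hε hΛ ht) u)
    (intervalIntegrable_of_continuousOn_uncurry continuousOn_uncurry_heat'' hε hΛ (mem_univ u))

theorem hasDerivAt_integral_heat (hε : 0 < ε) (hΛ : 0 < Λ) (u : ℝ) :
    HasDerivAt (fun v => ∫ t in ε..Λ, heat t v) (∫ t in ε..Λ, heat' t u) u := by
  have hpos : [[ε, Λ]] ⊆ Ioi 0 := ordConnected_Ioi.uIcc_subset hε hΛ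
  exact hasDerivAt_intervalIntegral_of_continuousOn univ_mem
    (fun v _ => intervalIntegrable_heat hε hΛ v)
    (continuousOn_uncurry_heat'.mono (prod_mono_left hpos))
    (fun t ht v _ => hasDerivAt_heat (hpos (uIoc_subset_uIcc ht)).ne' v)

theorem hasDerivAt_integral_heat' (hε : 0 < ε) (hΛ : 0 < Λ) (u : ℝ) :
    HasDerivAt (fun v => ∫ t in ε..Λ, heat' t v) (heat Λ u - heat ε u) u := by
  have hpos : [[ε, Λ]] ⊆ Ioi 0 := ordConnected_Ioi.uIcc_subset hε hΛ
  rw [← integral_heat'' hε hΛ u]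
  exact hasDerivAt_intervalIntegral_of_continuousOn univ_mem
    (fun v _ => intervalIntegrable_heat' hε hΛ v)
    (continuousOn_uncurry_heat''.mono (prod_mono_left hpos))
    (fun t ht v _ => hasDerivAt_heat' (hpos (uIoc_subset_uIcc ht)).ne' v)

theorem integral_linearCombination_heat (hε : 0 < ε) (hΛ : 0 < Λ) (a b u : ℝ) :
    ∫ t in ε..Λ, (a * heat t u + b * heat' t u) =
      a * (∫ t in ε..Λ, heat t u) + b * ∫ t in ε..Λ, heat' t u := by
  rw [intervalIntegral.integral_add ((intervalIntegrable_heat hε hΛ u).const_mul a)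
    ((intervalIntegrable_heat' hε hΛ u).const_mul b), intervalIntegral.integral_const_mul,
    intervalIntegral.integral_const_mul]

end HeatIntegral

theorem stmt12_general {φ : ℝ → ℝ} {ε Λ u : ℝ} (hφ : ∀ᶠ v in 𝓝 u, DifferentiableAt ℝ φ v)
    (hφ' : DifferentiableAt ℝ (deriv φ) u) (hε : 0 < ε) (hΛ : 0 < Λ) :
    HasDerivAt (fun v => ∫ t in ε..Λ, phiHeat' φ t v)
      (φ u * (heat Λ u - heat ε u) +
        ∫ t in ε..Λ, (deriv (deriv φ) u * heat t u + 2 * deriv φ u * heat' t u)) u := by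
  simp only [phiHeat', integral_linearCombination_heat hε hΛ]
  have hφ'_heat := hφ'.hasDerivAt.mul (hasDerivAt_integral_heat hε hΛ u)
  have hφ_heat' := hφ.self_of_nhds.hasDerivAt.mul (hasDerivAt_integral_heat' hε hΛ u)
  exact (hφ'_heat.add hφ_heat').congr_deriv (by ring)

/-- For every `0 < ε < Λ`, the function `u ↦ ∫_ε^Λ (φh_t)′(u) dt` is differentiable at
every `u`, with derivative
`φ(u)·(h_Λ(u) − h_ε(u)) + ∫_ε^Λ [φ″(u)·h_t(u) + 2·φ′(u)·h_t′(u)] dt`. -/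
theorem stmt12 (φ : ℝ → ℝ) (hφ : ContDiff ℝ (⊤ : ℕ∞) φ) (hsupp : HasCompactSupport φ)
    (heven : ∀ x, φ (-x) = φ x) (δ : ℝ) (hδ : 0 < δ) (hone : ∀ x, |x| < δ → φ x = 1)
    (ε Λ : ℝ) (hε : 0 < ε) (hεΛ : ε < Λ) (u : ℝ) :
    HasDerivAt (fun v => ∫ t in ε..Λ, phiHeat' φ t v)
      (φ u * (heat Λ u - heat ε u) +
        ∫ t in ε..Λ, (deriv (deriv φ) u * heat t u + 2 * deriv φ u * heat' t u)) u := by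
  have hφ' : ContDiff ℝ (⊤ : ℕ∞) (deriv φ) := hφ.deriv'
  exact stmt12_general (.of_forall (hφ.differentiable (by simp)))
    (hφ'.differentiable (by simp) u) hε (hε.trans hεΛ)
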